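/- Let γ = (γ_j)_{j≥1} be positive weights such that ∑_{j≥1} exp(−c·γ_j^{−2}) < ∞ for some constant c > 0. Then there exists a constant C > 0 (depending only on γ) such that for all s, N ∈ ℕ one has disc_γ(N,s) ≤ C/√N. -/

import Mathlib

open Finset

/-- Local discrepancy of the point set `x` at the corner point `t`:
`Δ(t) = #{n : x_n ∈ [0,t)}/N − ∏_j t_j`. -/
noncomputable def localDisc {N s : ℕ} (x : Fin N → Fin s → ℝ) (t : Fin s → ℝ) : ℝ :=
  ((univ.filter fun n => ∀ j, x n j < t j).card : ℝ) / N - ∏ j, t j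

/-- `(z_u, 1)`: the vector `z` with all components whose index is not in `u`
replaced by `1`. -/
def projPoint {s : ℕ} (u : Finset (Fin s)) (z : Fin s → ℝ) : Fin s → ℝ :=
  fun j => if j ∈ u then z j else 1

/-- The weight `γ_u = ∏_{j ∈ u} γ_j` of a set of coordinates `u ⊆ {1,…,s}`;
coordinate `j : Fin s` carries weight `γ (j+1)` (weights are indexed from `1`). -/
noncomputable def weightOf {s : ℕ} (γ : ℕ → ℝ) (u : Finset (Fin s)) : ℝ :=
  ∏ j ∈ u, γ (j.1 + 1)

/-- Weighted star-discrepancy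
`D*_γ(x) = sup_{z ∈ [0,1]^s} max_{∅ ≠ u ⊆ [s]} γ_u |Δ(z_u,1)|`. -/
noncomputable def wStarDisc {N s : ℕ} (γ : ℕ → ℝ) (x : Fin N → Fin s → ℝ) : ℝ :=
  sSup {d : ℝ | ∃ z : Fin s → ℝ, (∀ j, z j ∈ Set.Icc (0:ℝ) 1) ∧
    ∃ u : Finset (Fin s), u.Nonempty ∧
      d = weightOf γ u * |localDisc x (projPoint u z)|}

/-- `N`-th minimal weighted star-discrepancy `disc_γ(N,s)`. -/
noncomputable def wMinDisc (γ : ℕ → ℝ) (N s : ℕ) : ℝ :=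
  sInf {d : ℝ | ∃ x : Fin N → Fin s → ℝ,
    (∀ n j, x n j ∈ Set.Ico (0:ℝ) 1) ∧ d = wStarDisc γ x}

open MeasureTheory ProbabilityTheory Filter

/-!
Sample the `N` points independently and uniformly. For each nonempty `u ⊆ [s]`, write a box anchored
in the face of `u` as a telescoping chain of increments between consecutive dyadic grids. At level
`k` an increment has measure at most `|u| 2⁻ᵏ`, so by Bernstein's inequality the increments stay of
order `t √N (3/4)ᵏ` simultaneously, except with probability `2 exp(-t² / (8|u|))`; the chain stops
at `2ᵏ ≈ √N / t`, beyond which the remaining error is deterministic.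

Now let `t = t_u` be a large multiple of `∏_{j ∈ u} (2γ_j)⁻¹`. Then `γ_u |u| t_u` is bounded. A
product of factors `≥ 2` dominates their sum, and only finitely many of the `γ_j⁻² / 8` are below
`2`, so `t_u² / |u|` is at least a large multiple of `∑_{j ∈ u} γ_j⁻²`. Hence the failure
probabilities are bounded by products `∏_{j ∈ u} e_j` with `∑_j e_j` small, and summing over `u`
gives at most `2 (exp (∑_j e_j) - 1) < 1`: a good configuration exists.
-/

section CountDeviation

variable {X κ : Type*} [MeasurableSpace X] [Fintype κ] {μ : Measure X} {A B C : Set X}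

/-- The deviation `#{n : x n ∈ A} - |κ| * μ A` of the number of sample points in `A` from its mean
under independent sampling from `μ`, written as a sum of centred indicators. -/
noncomputable def countDev (μ : Measure X) (x : κ → X) (A : Set X) : ℝ :=
  ∑ n, (A.indicator 1 (x n) - μ.real A)

lemma countDev_eq_sum_indicator_sub (μ : Measure X) (x : κ → X) (A : Set X) :
    countDev μ x A = ∑ n, A.indicator 1 (x n) - Fintype.card κ * μ.real A := by
  simp [countDev, sum_sub_distrib]

lemma countDev_sdiff [IsFiniteMeasure μ] (x : κ → X) (hA : MeasurableSet A) (hAB : A ⊆ B) :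
    countDev μ x (B \ A) = countDev μ x B - countDev μ x A := by
  simp only [countDev, ← sum_sub_distrib, measureReal_sdiff (μ := μ) hAB hA,
    Set.indicator_sdiff hAB, Pi.sub_apply]
  exact sum_congr rfl fun n _ => by ring

lemma abs_countDev_le_card [IsProbabilityMeasure μ] (x : κ → X) (A : Set X) :
    |countDev μ x A| ≤ Fintype.card κ := by
  refine (abs_sum_le_sum_abs _ _).trans ?_
  rw [← card_univ, ← nsmul_one]
  refine sum_le_card_nsmul _ _ _ fun n _ => ?_
  have h0 : 0 ≤ μ.real A := measureReal_nonneg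
  have h1 : μ.real A ≤ 1 := measureReal_le_one
  by_cases hn : x n ∈ A <;> simp only [hn, Set.indicator_of_mem, Set.indicator_of_notMem,
    not_false_eq_true, Pi.one_apply, abs_le] <;> constructor <;> linarith

lemma abs_countDev_le_of_subset_of_subset {x : κ → X} {η ε : ℝ} (hAB : A ⊆ B) (hBC : B ⊆ C)
    (hA : |countDev μ x A| ≤ η) (hC : |countDev μ x C| ≤ η)
    (hB : μ.real B ∈ Set.Icc (μ.real A) (μ.real C)) (hε : μ.real C ≤ μ.real A + ε) :
    |countDev μ x B| ≤ η + Fintype.card κ * ε := by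
  have hcard : (0 : ℝ) ≤ Fintype.card κ := by positivity
  have hind {S T : Set X} (h : S ⊆ T) :
      ∑ n, S.indicator (1 : X → ℝ) (x n) ≤ ∑ n, T.indicator (1 : X → ℝ) (x n) :=
    sum_le_sum fun n _ => Set.indicator_le_indicator_of_subset h (fun _ => zero_le_one) _
  have hlow := mul_le_mul_of_nonneg_left hB.1 hcard
  have hupp := mul_le_mul_of_nonneg_left hB.2 hcard
  have hgap := mul_le_mul_of_nonneg_left hε hcard
  rw [countDev_eq_sum_indicator_sub, abs_le] at *
  constructor <;> linarith [hind hAB, hind hBC]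

lemma mgf_indicator_sub_le [IsProbabilityMeasure μ] (hA : MeasurableSet A) {l : ℝ} (hl : |l| ≤ 1) :
    mgf (fun y => A.indicator 1 y - μ.real A) μ l ≤ Real.exp (μ.real A * l ^ 2) := by
  set q := μ.real A
  have hexp (y : X) : Real.exp (l * (A.indicator 1 y - q)) =
      Real.exp (-(l * q)) * (1 + A.indicator 1 y * (Real.exp l - 1)) := by
    by_cases hy : y ∈ A
    · simp [hy, ← Real.exp_add]; ring_nf
    · simp [hy]
  have hint : Integrable (fun y => A.indicator (1 : X → ℝ) y * (Real.exp l - 1)) μ :=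
    ((integrable_const 1).indicator hA).mul_const _
  calc mgf (fun y => A.indicator 1 y - q) μ l
      = Real.exp (-(l * q)) * (1 + q * (Real.exp l - 1)) := by
        simp only [mgf, hexp]
        rw [integral_const_mul, integral_add (integrable_const 1) hint, integral_mul_const,
          integral_indicator_one hA]
        simp [q]
    _ ≤ Real.exp (-(l * q)) * Real.exp (q * (Real.exp l - 1)) := by
        gcongr
        linarith [Real.add_one_le_exp (q * (Real.exp l - 1))]
    _ = Real.exp (q * (Real.exp l - 1 - l)) := by rw [← Real.exp_add]; ring_nf
    _ ≤ Real.exp (q * l ^ 2) := by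
        gcongr
        exact (abs_le.1 (Real.abs_exp_sub_one_sub_id_le hl)).2

lemma mgf_countDev_le [IsProbabilityMeasure μ] (hA : MeasurableSet A) {l : ℝ} (hl : |l| ≤ 1) :
    mgf (fun x : κ → X => countDev μ x A) (Measure.pi fun _ => μ) l ≤
      Real.exp (Fintype.card κ * μ.real A * l ^ 2) := by
  calc mgf (fun x : κ → X => countDev μ x A) (Measure.pi fun _ => μ) l
      = mgf (fun y => A.indicator 1 y - μ.real A) μ l ^ Fintype.card κ := by
        simp only [mgf, countDev, mul_sum, Real.exp_sum]
        rw [integral_fintype_prod_eq_prod (fun _ y => Real.exp (l * (A.indicator 1 y - μ.real A))),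
          prod_const, card_univ]
    _ ≤ Real.exp (μ.real A * l ^ 2) ^ Fintype.card κ :=
        pow_le_pow_left₀ mgf_nonneg (mgf_indicator_sub_le hA hl) _
    _ = Real.exp (Fintype.card κ * μ.real A * l ^ 2) := by rw [← Real.exp_nat_mul, mul_assoc]

lemma integrable_exp_mul_countDev [IsProbabilityMeasure μ] (hA : MeasurableSet A) (l : ℝ) :
    Integrable (fun x : κ → X => Real.exp (l * countDev μ x A)) (Measure.pi fun _ => μ) := by
  have hmeas : Measurable fun x : κ → X => countDev μ x A := by
    unfold countDev
    have := measurable_one.indicator (f := (1 : X → ℝ)) hA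
    fun_prop
  refine .of_bound (by fun_prop) (Real.exp (|l| * Fintype.card κ)) (.of_forall fun x => ?_)
  rw [Real.norm_eq_abs, Real.abs_exp, Real.exp_le_exp]
  calc l * countDev μ x A ≤ |l| * |countDev μ x A| := (le_abs_self _).trans (abs_mul _ _).le
    _ ≤ |l| * Fintype.card κ := by gcongr; exact abs_countDev_le_card x A

lemma measureReal_le_abs_countDev_le_exp [IsProbabilityMeasure μ] (hA : MeasurableSet A) {l : ℝ}
    (hl : l ∈ Set.Icc 0 1) (τ : ℝ) :
    (Measure.pi fun _ : κ => μ).real {x | τ ≤ |countDev μ x A|} ≤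
      2 * Real.exp (Fintype.card κ * μ.real A * l ^ 2 - l * τ) := by
  set P := Measure.pi fun _ : κ => μ
  set v := Fintype.card κ * μ.real A * l ^ 2
  have habs : |l| ≤ 1 := by rw [abs_of_nonneg hl.1]; exact hl.2
  have hupper : P.real {x | τ ≤ countDev μ x A} ≤ Real.exp (v - l * τ) :=
    calc _ ≤ Real.exp (-l * τ) * mgf (fun x => countDev μ x A) P l :=
          measure_ge_le_exp_mul_mgf τ hl.1 (integrable_exp_mul_countDev hA l)
      _ ≤ Real.exp (-l * τ) * Real.exp v := by gcongr; exact mgf_countDev_le hA habs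
      _ = Real.exp (v - l * τ) := by rw [← Real.exp_add]; ring_nf
  have hlower : P.real {x | countDev μ x A ≤ -τ} ≤ Real.exp (v - l * τ) :=
    calc _ ≤ Real.exp (-(-l) * -τ) * mgf (fun x => countDev μ x A) P (-l) :=
          measure_le_le_exp_mul_mgf (-τ) (neg_nonpos.2 hl.1) (integrable_exp_mul_countDev hA (-l))
      _ ≤ Real.exp (-(-l) * -τ) * Real.exp v := by
          gcongr
          simpa only [neg_sq] using mgf_countDev_le hA ((abs_neg l).trans_le habs)
      _ = Real.exp (v - l * τ) := by rw [← Real.exp_add]; ring_nf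
  have hsplit : {x : κ → X | τ ≤ |countDev μ x A|} =
      {x | τ ≤ countDev μ x A} ∪ {x | countDev μ x A ≤ -τ} := by
    ext x
    simp only [Set.mem_ofPred_eq, Set.mem_union, le_abs, le_neg]
  rw [hsplit]
  linarith [measureReal_union_le (μ := P) {x | τ ≤ countDev μ x A} {x | countDev μ x A ≤ -τ}]

/-- A Bernstein inequality: for deviations up to the order of the mean, the Gaussian tail improves
with the probability `p` of the event. -/
lemma measureReal_le_abs_countDev_le [IsProbabilityMeasure μ] (hA : MeasurableSet A) {p τ : ℝ}
    (hp : μ.real A ≤ p) (hτ0 : 0 ≤ τ) (hτ : τ ≤ 2 * (Fintype.card κ * p)) :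
    (Measure.pi fun _ : κ => μ).real {x | τ ≤ |countDev μ x A|} ≤
      2 * Real.exp (-(τ ^ 2 / (4 * (Fintype.card κ * p)))) := by
  have hp0 : 0 ≤ p := measureReal_nonneg.trans hp
  -- `l` minimises `|κ| p l² - l τ`
  set l := τ / (2 * (Fintype.card κ * p)) with hl
  have hl01 : l ∈ Set.Icc 0 1 := ⟨by positivity, div_le_one_of_le₀ hτ (by positivity)⟩
  calc _ ≤ 2 * Real.exp (Fintype.card κ * μ.real A * l ^ 2 - l * τ) :=
        measureReal_le_abs_countDev_le_exp hA hl01 τ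
    _ ≤ 2 * Real.exp (Fintype.card κ * p * l ^ 2 - l * τ) := by gcongr
    _ = 2 * Real.exp (-(τ ^ 2 / (4 * (Fintype.card κ * p)))) := by
        by_cases h0 : Fintype.card κ * p = 0
        · simp [hl, h0]
        · rw [hl]; field_simp; ring_nf

end CountDeviation

section UnitCube

variable {ι : Type*}

/-- The box `[0,t)`. It is unbounded below, which makes no difference to points of the cube. -/
def anchoredBox (t : ι → ℝ) : Set (ι → ℝ) := {y | ∀ j, y j < t j}

/-- The points `(z_u, 1)` of the closed unit cube, whose coordinates outside `u` are `1`. -/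
def cubeFace (u : Finset ι) : Set (ι → ℝ) :=
  {w | (∀ j, w j ∈ Set.Icc (0 : ℝ) 1) ∧ ∀ j ∉ u, w j = 1}

lemma projPoint_mem_cubeFace {s : ℕ} (u : Finset (Fin s)) {z : Fin s → ℝ}
    (hz : ∀ j, z j ∈ Set.Icc (0 : ℝ) 1) : projPoint u z ∈ cubeFace u := by
  refine ⟨fun j => ?_, fun j hj => if_neg hj⟩
  unfold projPoint
  split_ifs
  exacts [hz j, ⟨zero_le_one, le_rfl⟩]

lemma measurableSet_anchoredBox [Countable ι] (t : ι → ℝ) : MeasurableSet (anchoredBox t) := by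
  unfold anchoredBox
  measurability

lemma anchoredBox_mono {s t : ι → ℝ} (h : s ≤ t) : anchoredBox s ⊆ anchoredBox t :=
  fun _ hy j => (hy j).trans_le (h j)

variable [Fintype ι]

/-- The uniform distribution on the half-open cube `[0,1)^ι`. -/
noncomputable def uniformCube (ι : Type*) [Fintype ι] : Measure (ι → ℝ) :=
  Measure.pi fun _ => volume.restrict (Set.Ico 0 1)

instance isProbabilityMeasure_volume_restrict_Ico :
    IsProbabilityMeasure (volume.restrict (Set.Ico (0 : ℝ) 1)) := ⟨by simp⟩

instance isProbabilityMeasure_uniformCube : IsProbabilityMeasure (uniformCube ι) :=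
  inferInstanceAs (IsProbabilityMeasure (Measure.pi _))

lemma ae_uniformCube_mem_Ico : ∀ᵐ y ∂uniformCube ι, ∀ j, y j ∈ Set.Ico (0 : ℝ) 1 :=
  ae_all_iff.2 fun _ =>
    (Measure.quasiMeasurePreserving_eval _ _).ae (ae_restrict_mem measurableSet_Ico)

lemma uniformCube_real_anchoredBox {t : ι → ℝ} (ht : ∀ j, t j ∈ Set.Icc (0 : ℝ) 1) :
    (uniformCube ι).real (anchoredBox t) = ∏ j, t j := by
  have hbox : anchoredBox t = Set.univ.pi fun j => Set.Iio (t j) := by ext; simp [anchoredBox]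
  have hcoord (j : ι) :
      volume.restrict (Set.Ico (0 : ℝ) 1) (Set.Iio (t j)) = ENNReal.ofReal (t j) := by
    rw [Measure.restrict_apply measurableSet_Iio, Set.inter_comm, Set.Ico_inter_Iio,
      min_eq_right (ht j).2, Real.volume_Ico, sub_zero]
  rw [Measure.real, hbox, uniformCube, Measure.pi_pi, ENNReal.toReal_prod]
  exact prod_congr rfl fun j _ => by rw [hcoord, ENNReal.toReal_ofReal (ht j).1]

lemma uniformCube_real_eval_preimage_Ico_le (j : ι) {a b : ℝ} (hab : a ≤ b) :
    (uniformCube ι).real (Function.eval j ⁻¹' Set.Ico a b) ≤ b - a := by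
  rw [uniformCube, (measurePreserving_eval _ j).measureReal_preimage
    measurableSet_Ico.nullMeasurableSet, ← Real.volume_real_Ico_of_le hab]
  exact ENNReal.toReal_mono measure_Ico_lt_top.ne (Measure.restrict_apply_le _ _)

lemma uniformCube_real_anchoredBox_sdiff_le {u : Finset ι} {s t : ι → ℝ} {ε : ℝ} (hst : s ≤ t)
    (hu : ∀ j ∉ u, s j = t j) (hε : ∀ j ∈ u, t j - s j ≤ ε) :
    (uniformCube ι).real (anchoredBox t \ anchoredBox s) ≤ #u * ε := by
  have hcover : anchoredBox t \ anchoredBox s ⊆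
      ⋃ j ∈ u, Function.eval j ⁻¹' Set.Ico (s j) (t j) := by
    rintro y ⟨hyt, hys⟩
    obtain ⟨j, hj⟩ : ∃ j, s j ≤ y j := by simpa [anchoredBox] using hys
    have hju : j ∈ u := by
      by_contra hju
      exact absurd (hyt j) (by rw [← hu j hju]; exact hj.not_gt)
    exact Set.mem_biUnion hju ⟨hj, hyt j⟩
  calc _ ≤ ∑ j ∈ u, (uniformCube ι).real (Function.eval j ⁻¹' Set.Ico (s j) (t j)) :=
        (measureReal_mono hcover (measure_ne_top _ _)).trans (measureReal_biUnion_finset_le _ _)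
    _ ≤ #u • ε := sum_le_card_nsmul _ _ _ fun j hj =>
        (uniformCube_real_eval_preimage_Ico_le j (hst j)).trans (hε j hj)
    _ = #u * ε := nsmul_eq_mul _ _

lemma localDisc_eq_countDev_div {N s : ℕ} (hN : N ≠ 0) (x : Fin N → Fin s → ℝ) {t : Fin s → ℝ}
    (ht : ∀ j, t j ∈ Set.Icc (0 : ℝ) 1) :
    localDisc x t = countDev (uniformCube (Fin s)) x (anchoredBox t) / N := by
  classical
  rw [countDev_eq_sum_indicator_sub, uniformCube_real_anchoredBox ht, localDisc, Fintype.card_fin,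
    sub_div, mul_div_cancel_left₀ _ (by exact_mod_cast hN)]
  simp [anchoredBox, Set.indicator_apply]

end UnitCube

section DyadicChaining

variable {ι κ : Type*} {u : Finset ι} {w : ι → ℝ} {k : ℕ}

/-- Coordinatewise rounding down to the grid `2⁻ᵏ ℕ`. -/
noncomputable def dyadicFloor (k : ℕ) (w : ι → ℝ) : ι → ℝ := fun j => ⌊2 ^ k * w j⌋₊ / 2 ^ k

/-- Coordinatewise rounding up to the grid `2⁻ᵏ ℕ`. -/
noncomputable def dyadicCeil (k : ℕ) (w : ι → ℝ) : ι → ℝ := fun j => ⌈2 ^ k * w j⌉₊ / 2 ^ k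

lemma dyadicFloor_le (hw : 0 ≤ w) : dyadicFloor k w ≤ w := fun j => by
  rw [dyadicFloor, div_le_iff₀' (by positivity)]
  exact Nat.floor_le (mul_nonneg (by positivity) (hw j))

lemma le_dyadicCeil (k : ℕ) (w : ι → ℝ) : w ≤ dyadicCeil k w := fun j => by
  rw [dyadicCeil, le_div_iff₀' (by positivity)]
  exact Nat.le_ceil _

lemma dyadicCeil_sub_dyadicFloor_le (k : ℕ) (w : ι → ℝ) (j : ι) :
    dyadicCeil k w j - dyadicFloor k w j ≤ 1 / 2 ^ k := by
  rw [dyadicCeil, dyadicFloor, ← sub_div]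
  gcongr
  rw [sub_le_iff_le_add']
  exact_mod_cast Nat.ceil_le_floor_add_one (2 ^ k * w j)

lemma dyadicFloor_apply_of_eq_one {j : ι} (hj : w j = 1) : dyadicFloor k w j = 1 := by
  have hfloor : ⌊(2 : ℝ) ^ k⌋₊ = 2 ^ k := by exact_mod_cast Nat.floor_natCast (R := ℝ) (2 ^ k)
  simp [dyadicFloor, hj, hfloor]

lemma dyadicCeil_apply_of_eq_one {j : ι} (hj : w j = 1) : dyadicCeil k w j = 1 := by
  have hceil : ⌈(2 : ℝ) ^ k⌉₊ = 2 ^ k := by exact_mod_cast Nat.ceil_natCast (R := ℝ) (2 ^ k)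
  simp [dyadicCeil, hj, hceil]

/-- The increment by which the box at `w` exceeds its inner approximation on the grid `2⁻ᵏ ℕ`. -/
noncomputable def dyadicShell (k : ℕ) (w : ι → ℝ) : Set (ι → ℝ) :=
  anchoredBox w \ anchoredBox (dyadicFloor k w)

lemma measurableSet_dyadicShell [Countable ι] (k : ℕ) (w : ι → ℝ) :
    MeasurableSet (dyadicShell k w) :=
  (measurableSet_anchoredBox _).diff (measurableSet_anchoredBox _)

variable [Fintype ι]

lemma uniformCube_real_dyadicShell_le (hw : w ∈ cubeFace u) (k : ℕ) :
    (uniformCube ι).real (dyadicShell k w) ≤ #u * (1 / 2 ^ k) := by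
  refine uniformCube_real_anchoredBox_sdiff_le (dyadicFloor_le fun j => (hw.1 j).1)
    (fun j hj => (dyadicFloor_apply_of_eq_one (hw.2 j hj)).trans (hw.2 j hj).symm) fun j _ => ?_
  linarith [le_dyadicCeil k w j, dyadicCeil_sub_dyadicFloor_le k w j]

variable [DecidableEq ι]

/-- The points of `cubeFace u` with coordinates in `2⁻ᵏ ℕ`. -/
noncomputable def dyadicGrid (u : Finset ι) (k : ℕ) : Finset (ι → ℝ) :=
  Fintype.piFinset fun j =>
    if j ∈ u then (range (2 ^ k + 1)).image fun m : ℕ => (m : ℝ) / 2 ^ k else {1}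

lemma mem_dyadicGrid : w ∈ dyadicGrid u k ↔
    (∀ j ∈ u, ∃ m : ℕ, m ≤ 2 ^ k ∧ (m : ℝ) / 2 ^ k = w j) ∧ ∀ j ∉ u, w j = 1 := by
  simp only [dyadicGrid, Fintype.mem_piFinset, ← forall_and]
  refine forall_congr' fun j => ?_
  by_cases hj : j ∈ u <;> simp [hj]

lemma card_dyadicGrid_le (u : Finset ι) (k : ℕ) : #(dyadicGrid u k) ≤ (2 ^ k + 1) ^ #u := by
  rw [dyadicGrid, Fintype.card_piFinset, ← prod_const, ← prod_subset (subset_univ u)]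
  · refine prod_le_prod' fun j hj => ?_
    rw [if_pos hj]
    exact card_image_le.trans_eq (card_range _)
  · intro j _ hj
    rw [if_neg hj, card_singleton]

lemma mem_cubeFace_of_mem_dyadicGrid (hw : w ∈ dyadicGrid u k) : w ∈ cubeFace u := by
  obtain ⟨hgrid, hone⟩ := mem_dyadicGrid.1 hw
  refine ⟨fun j => ?_, hone⟩
  by_cases hj : j ∈ u
  · obtain ⟨m, hm, hmw⟩ := hgrid j hj
    exact hmw ▸ ⟨by positivity, div_le_one_of_le₀ (by exact_mod_cast hm) (by positivity)⟩
  · simp [hone j hj]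

lemma dyadicCeil_mem_dyadicGrid (hw : w ∈ cubeFace u) (k : ℕ) :
    dyadicCeil k w ∈ dyadicGrid u k := by
  refine mem_dyadicGrid.2 ⟨fun j _ => ⟨_, ?_, rfl⟩, fun j hj => ?_⟩
  · refine Nat.ceil_le.2 ?_
    rw [Nat.cast_pow, Nat.cast_ofNat]
    exact mul_le_of_le_one_right (by positivity) (hw.1 j).2
  · exact dyadicCeil_apply_of_eq_one (hw.2 j hj)

lemma dyadicFloor_mem_dyadicGrid (hw : w ∈ cubeFace u) (k : ℕ) :
    dyadicFloor k w ∈ dyadicGrid u k := by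
  refine mem_dyadicGrid.2 ⟨fun j _ => ⟨_, ?_, rfl⟩, fun j hj => ?_⟩
  · refine Nat.floor_le_of_le ?_
    rw [Nat.cast_pow, Nat.cast_ofNat]
    exact mul_le_of_le_one_right (by positivity) (hw.1 j).2
  · exact dyadicFloor_apply_of_eq_one (hw.2 j hj)

variable [Fintype κ] {x : κ → ι → ℝ}

lemma countDev_anchoredBox_eq_zero (hx : ∀ n j, x n j ∈ Set.Ico (0 : ℝ) 1)
    (hw : w ∈ dyadicGrid u 0) : countDev (uniformCube ι) x (anchoredBox w) = 0 := by
  have hface := mem_cubeFace_of_mem_dyadicGrid hw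
  rw [countDev_eq_sum_indicator_sub, uniformCube_real_anchoredBox hface.1]
  by_cases hzero : ∃ j, w j = 0
  · obtain ⟨j, hj⟩ := hzero
    have hout (n : κ) : x n ∉ anchoredBox w := fun h => (hj ▸ h j).not_ge (hx n j).1
    simp [hout, prod_eq_zero (mem_univ j) hj]
  · have hone : w = 1 := by
      funext j
      by_cases hj : j ∈ u
      · obtain ⟨m, hm, hmw⟩ := (mem_dyadicGrid.1 hw).1 j hj
        have hm0 : m ≠ 0 := fun h => hzero ⟨j, by simp [← hmw, h]⟩
        have hm1 : m = 1 := by rw [pow_zero] at hm; omega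
        simp [← hmw, hm1]
      · exact hface.2 j hj
    subst hone
    have hin (n : κ) : x n ∈ anchoredBox 1 := fun j => (hx n j).2
    simp [hin]

lemma abs_countDev_anchoredBox_le_sum (hx : ∀ n j, x n j ∈ Set.Ico (0 : ℝ) 1) {δ : ℕ → ℝ} {L : ℕ}
    (hδ : ∀ k < L, ∀ w ∈ dyadicGrid u (k + 1),
      |countDev (uniformCube ι) x (dyadicShell k w)| ≤ δ k) :
    ∀ w ∈ dyadicGrid u L, |countDev (uniformCube ι) x (anchoredBox w)| ≤ ∑ k ∈ range L, δ k := by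
  induction L with
  | zero =>
    intro w hw
    simp [countDev_anchoredBox_eq_zero hx hw]
  | succ L ih =>
    intro w hw
    have hface := mem_cubeFace_of_mem_dyadicGrid hw
    have hcoarse := ih (fun k hk => hδ k (by omega)) _ (dyadicFloor_mem_dyadicGrid hface L)
    have hshell := hδ L L.lt_succ_self w hw
    rw [dyadicShell, countDev_sdiff _ (measurableSet_anchoredBox _)
      (anchoredBox_mono (dyadicFloor_le fun j => (hface.1 j).1))] at hshell
    rw [sum_range_succ]
    linarith [abs_sub_abs_le_abs_sub (countDev (uniformCube ι) x (anchoredBox w))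
      (countDev (uniformCube ι) x (anchoredBox (dyadicFloor L w)))]

lemma abs_countDev_anchoredBox_le (hx : ∀ n j, x n j ∈ Set.Ico (0 : ℝ) 1) {δ : ℕ → ℝ} {L : ℕ}
    (hδ : ∀ k < L, ∀ w ∈ dyadicGrid u (k + 1),
      |countDev (uniformCube ι) x (dyadicShell k w)| ≤ δ k) (hw : w ∈ cubeFace u) :
    |countDev (uniformCube ι) x (anchoredBox w)| ≤
      ∑ k ∈ range L, δ k + Fintype.card κ * (#u * (1 / 2 ^ L)) := by
  have hfloor := dyadicFloor_mem_dyadicGrid hw L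
  have hceil := dyadicCeil_mem_dyadicGrid hw L
  have hfloor_le : dyadicFloor L w ≤ w := dyadicFloor_le fun j => (hw.1 j).1
  have hle_ceil := le_dyadicCeil L w
  refine abs_countDev_le_of_subset_of_subset
    (anchoredBox_mono hfloor_le) (anchoredBox_mono hle_ceil)
    (abs_countDev_anchoredBox_le_sum hx hδ _ hfloor) (abs_countDev_anchoredBox_le_sum hx hδ _ hceil)
    ⟨measureReal_mono (anchoredBox_mono hfloor_le), measureReal_mono (anchoredBox_mono hle_ceil)⟩ ?_
  have hsub : anchoredBox (dyadicFloor L w) ⊆ anchoredBox (dyadicCeil L w) :=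
    anchoredBox_mono (hfloor_le.trans hle_ceil)
  rw [← sub_le_iff_le_add', ← measureReal_sdiff hsub (measurableSet_anchoredBox _)]
  exact uniformCube_real_anchoredBox_sdiff_le (hfloor_le.trans hle_ceil)
    (fun j hj => ((mem_dyadicGrid.1 hfloor).2 j hj).trans ((mem_dyadicGrid.1 hceil).2 j hj).symm)
    fun j _ => dyadicCeil_sub_dyadicFloor_le L w j

end DyadicChaining

section UniformDeviation

lemma two_pow_add_one_pow_le_exp {m : ℕ} (hm : m ≠ 0) (d : ℕ) :
    ((2 : ℝ) ^ m + 1) ^ d ≤ Real.exp (2 * m * d) := by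
  have htwo : (2 : ℝ) ^ m + 1 ≤ (2 ^ 2) ^ m := by
    have : (2 : ℝ) ≤ 2 ^ m := le_self_pow₀ one_le_two hm
    rw [pow_right_comm]
    nlinarith
  calc ((2 : ℝ) ^ m + 1) ^ d ≤ ((Real.exp 1 ^ 2) ^ m) ^ d := by
        gcongr
        refine htwo.trans ?_
        gcongr
        linarith [Real.exp_one_gt_d9]
    _ = Real.exp (2 * m * d) := by
        rw [← pow_mul, ← pow_mul, ← Real.exp_nat_mul]
        push_cast
        ring_nf

/-- The growing rate `q (9/8)ᵐ` beats the cardinality of the `m`-th grid. -/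
lemma two_pow_add_one_pow_mul_exp_le {m d : ℕ} {q : ℝ} (hm : m ≠ 0) (hq : 16 * d + 8 ≤ q) :
    (2 ^ m + 1) ^ d * Real.exp (-(q * (9 / 8) ^ m)) ≤ Real.exp (-q) * (1 / 2) ^ m := by
  have hbernoulli : 1 + (m : ℝ) / 8 ≤ (9 / 8) ^ m := by
    have := one_add_mul_le_pow (a := (1 / 8 : ℝ)) (by norm_num) m
    norm_num at this ⊢
    linarith
  have hexponent : 2 * m * d - q * (9 / 8) ^ m ≤ -q - m := by
    have : q * (1 + m / 8) ≤ q * (9 / 8) ^ m := by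
      gcongr
      exact le_trans (by positivity) hq
    nlinarith [(Nat.cast_nonneg m : (0 : ℝ) ≤ m)]
  calc (2 ^ m + 1) ^ d * Real.exp (-(q * (9 / 8) ^ m))
      ≤ Real.exp (2 * m * d) * Real.exp (-(q * (9 / 8) ^ m)) := by
        gcongr
        exact two_pow_add_one_pow_le_exp hm d
    _ = Real.exp (2 * m * d - q * (9 / 8) ^ m) := by rw [← Real.exp_add, sub_eq_add_neg]
    _ ≤ Real.exp (-q - m) := by gcongr
    _ = Real.exp (-q) * Real.exp (-1) ^ m := by
        rw [← Real.exp_nat_mul, ← Real.exp_add]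
        ring_nf
    _ ≤ Real.exp (-q) * (1 / 2) ^ m := by
        gcongr
        rw [Real.exp_neg, ← one_div]
        exact one_div_le_one_div_of_le two_pos (by linarith [Real.exp_one_gt_d9])

lemma sum_three_quarters_pow_succ_le (L : ℕ) : ∑ k ∈ range L, (3 / 4 : ℝ) ^ (k + 1) ≤ 3 := by
  have hclosed : ∑ k ∈ range L, (3 / 4 : ℝ) ^ (k + 1) = 3 - 3 * (3 / 4) ^ L := by
    induction L with
    | zero => simp
    | succ L ih => rw [sum_range_succ, ih]; ring
  rw [hclosed]
  linarith [show (0 : ℝ) ≤ (3 / 4) ^ L by positivity]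

variable {ι κ : Type*} [Fintype ι] [Fintype κ] {u : Finset ι} {t : ℝ} {L k : ℕ}

lemma measureReal_le_abs_countDev_dyadicShell_le {w : ι → ℝ} (hu : u.Nonempty) (ht : 0 < t)
    (hk : t * 2 ^ k ≤ √(Fintype.card κ)) (hw : w ∈ cubeFace u) :
    (Measure.pi fun _ : κ => uniformCube ι).real
        {x | t * √(Fintype.card κ) * (3 / 4) ^ (k + 1) ≤
          |countDev (uniformCube ι) x (dyadicShell k w)|} ≤
      2 * Real.exp (-(t ^ 2 / (8 * #u) * (9 / 8) ^ (k + 1))) := by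
  have hd : (1 : ℝ) ≤ #u := by exact_mod_cast hu.card_pos
  set r := √(Fintype.card κ)
  have hr2 : r ^ 2 = Fintype.card κ := Real.sq_sqrt (Nat.cast_nonneg _)
  have hr0 : 0 < r := lt_of_lt_of_le (by positivity) hk
  set τ := t * r * (3 / 4) ^ (k + 1) with hτ
  have hτ_le : τ ≤ 2 * (Fintype.card κ * (#u * (1 / 2 ^ k))) := by
    calc τ ≤ t * r := mul_le_of_le_one_right (by positivity)
          (pow_le_one₀ (by norm_num) (by norm_num))
      _ ≤ r / 2 ^ k * r := by
          gcongr
          rwa [le_div_iff₀ (by positivity)]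
      _ = 1 * (r ^ 2 * (1 * (1 / 2 ^ k))) := by ring
      _ ≤ 2 * (Fintype.card κ * (#u * (1 / 2 ^ k))) := by
          rw [← hr2]
          gcongr
          norm_num
  have hrate : τ ^ 2 / (4 * (Fintype.card κ * (#u * (1 / 2 ^ k)))) =
      t ^ 2 / (8 * #u) * (9 / 8) ^ (k + 1) := by
    rw [hτ, ← hr2, show (9 / 8 : ℝ) = (3 / 4) ^ 2 * 2 by norm_num, mul_pow _ (2 : ℝ),
      pow_right_comm _ 2, pow_succ (2 : ℝ) k]
    field_simp
    ring
  rw [← hrate]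
  exact measureReal_le_abs_countDev_le (measurableSet_dyadicShell k w)
    (uniformCube_real_dyadicShell_le hw k) (by positivity) hτ_le

section

variable [DecidableEq ι]

/-- The configurations for which some increment at level `k` of the chaining over the face `u`
reaches `t √|κ| (3/4)ᵏ⁺¹`. These thresholds are summable in `k`, yet, the variance of the increments
being of order `2⁻ᵏ`, the exponent in their tail bound still grows like `(9/8)ᵏ`. -/
def badIncrements (κ : Type*) [Fintype κ] (u : Finset ι) (t : ℝ) (k : ℕ) : Set (κ → ι → ℝ) :=
  ⋃ w ∈ dyadicGrid u (k + 1), {x | t * √(Fintype.card κ) * (3 / 4) ^ (k + 1) ≤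
    |countDev (uniformCube ι) x (dyadicShell k w)|}

lemma measureReal_badIncrements_le (hu : u.Nonempty) (ht : 14 * (#u : ℝ) ≤ t)
    (hk : t * 2 ^ k ≤ √(Fintype.card κ)) :
    (Measure.pi fun _ : κ => uniformCube ι).real (badIncrements κ u t k) ≤
      Real.exp (-(t ^ 2 / (8 * #u))) * (1 / 2) ^ k := by
  have hd : (1 : ℝ) ≤ #u := by exact_mod_cast hu.card_pos
  set q := t ^ 2 / (8 * #u) with hq
  have hq_le : 16 * (#u : ℝ) + 8 ≤ q := by
    rw [hq, le_div_iff₀ (by positivity)]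
    nlinarith
  calc (Measure.pi fun _ : κ => uniformCube ι).real (badIncrements κ u t k)
      ≤ ∑ w ∈ dyadicGrid u (k + 1), (Measure.pi fun _ : κ => uniformCube ι).real
          {x | t * √(Fintype.card κ) * (3 / 4) ^ (k + 1) ≤
            |countDev (uniformCube ι) x (dyadicShell k w)|} :=
        measureReal_biUnion_finset_le _ _
    _ ≤ #(dyadicGrid u (k + 1)) • (2 * Real.exp (-(q * (9 / 8) ^ (k + 1)))) :=
        sum_le_card_nsmul _ _ _ fun w hw => measureReal_le_abs_countDev_dyadicShell_le hu
          (by linarith) hk (mem_cubeFace_of_mem_dyadicGrid hw)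
    _ ≤ (2 ^ (k + 1) + 1) ^ #u * (2 * Real.exp (-(q * (9 / 8) ^ (k + 1)))) := by
        rw [nsmul_eq_mul]
        gcongr
        exact_mod_cast card_dyadicGrid_le u (k + 1)
    _ ≤ 2 * (Real.exp (-q) * (1 / 2) ^ (k + 1)) := by
        rw [mul_left_comm]
        exact mul_le_mul_of_nonneg_left
          (two_pow_add_one_pow_mul_exp_le k.succ_ne_zero hq_le) zero_le_two
    _ = Real.exp (-q) * (1 / 2) ^ k := by ring

lemma abs_countDev_le_of_forall_notMem_badIncrements {x : κ → ι → ℝ} {w : ι → ℝ}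
    (hu : u.Nonempty) (ht : 0 ≤ t) (hL : √(Fintype.card κ) ≤ t * 2 ^ (L + 1))
    (hx : ∀ n j, x n j ∈ Set.Ico (0 : ℝ) 1) (hgood : ∀ k < L, x ∉ badIncrements κ u t k)
    (hw : w ∈ cubeFace u) :
    |countDev (uniformCube ι) x (anchoredBox w)| ≤ 5 * #u * (t * √(Fintype.card κ)) := by
  have hd : (1 : ℝ) ≤ #u := by exact_mod_cast hu.card_pos
  set r := √(Fintype.card κ)
  have hr2 : r * r = Fintype.card κ := Real.mul_self_sqrt (Nat.cast_nonneg _)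
  have hr0 : 0 ≤ r := Real.sqrt_nonneg _
  have hincr : ∀ k < L, ∀ w ∈ dyadicGrid u (k + 1),
      |countDev (uniformCube ι) x (dyadicShell k w)| ≤ t * r * (3 / 4) ^ (k + 1) :=
    fun k hk w hw => le_of_not_ge fun h => hgood k hk (Set.mem_biUnion hw h)
  calc |countDev (uniformCube ι) x (anchoredBox w)|
      ≤ ∑ k ∈ range L, t * r * (3 / 4) ^ (k + 1) + Fintype.card κ * (#u * (1 / 2 ^ L)) :=
        abs_countDev_anchoredBox_le hx hincr hw
    _ ≤ t * r * 3 + #u * (2 * (t * r)) := by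
        rw [← mul_sum, ← hr2]
        refine add_le_add ?_ ?_
        · gcongr
          exact sum_three_quarters_pow_succ_le L
        · calc r * r * (#u * (1 / 2 ^ L)) = #u * (r / 2 ^ L * r) := by ring
            _ ≤ #u * (2 * t * r) := by
              gcongr
              rw [div_le_iff₀ (by positivity)]
              exact hL.trans_eq (by ring)
            _ = #u * (2 * (t * r)) := by ring
    _ ≤ 5 * #u * (t * r) := by nlinarith [mul_nonneg ht hr0]

end

/-- The configurations in `[0,1)^ι` whose count deviates by more than `5 |u| t √|κ|` on some box
anchored in the face `u`. -/
def badConfigurations (κ : Type*) [Fintype κ] (u : Finset ι) (t : ℝ) : Set (κ → ι → ℝ) :=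
  {x | (∀ n j, x n j ∈ Set.Ico (0 : ℝ) 1) ∧ ∃ w ∈ cubeFace u,
    5 * #u * (t * √(Fintype.card κ)) < |countDev (uniformCube ι) x (anchoredBox w)|}

lemma badConfigurations_eq_empty (hu : u.Nonempty) (ht : √(Fintype.card κ) ≤ t) :
    badConfigurations κ u t = ∅ := by
  refine Set.eq_empty_of_forall_notMem fun x ⟨_, w, _, hlarge⟩ => hlarge.not_ge ?_
  have hd : (1 : ℝ) ≤ #u := by exact_mod_cast hu.card_pos
  calc |countDev (uniformCube ι) x (anchoredBox w)|
      ≤ √(Fintype.card κ) * √(Fintype.card κ) := by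
        rw [Real.mul_self_sqrt (Nat.cast_nonneg _)]
        exact abs_countDev_le_card x _
    _ ≤ t * √(Fintype.card κ) := by gcongr
    _ ≤ 5 * #u * (t * √(Fintype.card κ)) :=
        le_mul_of_one_le_left (mul_nonneg ((Real.sqrt_nonneg _).trans ht) (Real.sqrt_nonneg _))
          (by linarith)

lemma measureReal_badConfigurations_le (hu : u.Nonempty) (ht : 14 * (#u : ℝ) ≤ t) :
    (Measure.pi fun _ : κ => uniformCube ι).real (badConfigurations κ u t) ≤
      2 * Real.exp (-(t ^ 2 / (8 * #u))) := by
  classical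
  have hd : (1 : ℝ) ≤ #u := by exact_mod_cast hu.card_pos
  have ht0 : 0 < t := by linarith
  set P := Measure.pi fun _ : κ => uniformCube ι
  rcases le_total √(Fintype.card κ) t with hsmall | hlarge
  · rw [badConfigurations_eq_empty hu hsmall, measureReal_empty]
    positivity
  obtain ⟨L, hL, hL'⟩ := exists_nat_pow_near ((one_le_div₀ ht0).2 hlarge) one_lt_two
  rw [le_div_iff₀' ht0] at hL
  rw [div_lt_iff₀' ht0] at hL'
  have hcover : badConfigurations κ u t ⊆ ⋃ k ∈ range L, badIncrements κ u t k := by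
    rintro x ⟨hx, w, hw, hdev⟩
    by_contra hgood
    simp only [Set.mem_iUnion, mem_range, not_exists] at hgood
    exact hdev.not_ge
      (abs_countDev_le_of_forall_notMem_badIncrements hu ht0.le hL'.le hx hgood hw)
  calc P.real (badConfigurations κ u t) ≤ ∑ k ∈ range L, P.real (badIncrements κ u t k) :=
        (measureReal_mono hcover (measure_ne_top _ _)).trans (measureReal_biUnion_finset_le _ _)
    _ ≤ ∑ k ∈ range L, Real.exp (-(t ^ 2 / (8 * #u))) * (1 / 2) ^ k := by
        refine sum_le_sum fun k hk => measureReal_badIncrements_le hu ht (le_trans ?_ hL)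
        gcongr
        exacts [one_le_two, (mem_range.1 hk).le]
    _ ≤ 2 * Real.exp (-(t ^ 2 / (8 * #u))) := by
        rw [← mul_sum, mul_comm]
        gcongr
        exact sum_geometric_two_le L

lemma exists_forall_abs_countDev_le {t : Finset ι → ℝ} (κ : Type*) [Fintype κ]
    (ht : ∀ u : Finset ι, u.Nonempty → 14 * (#u : ℝ) ≤ t u)
    (hsum : ∑ u with u.Nonempty, 2 * Real.exp (-(t u ^ 2 / (8 * #u))) < 1) :
    ∃ x : κ → ι → ℝ, (∀ n j, x n j ∈ Set.Ico (0 : ℝ) 1) ∧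
      ∀ u : Finset ι, u.Nonempty → ∀ w ∈ cubeFace u,
        |countDev (uniformCube ι) x (anchoredBox w)| ≤ 5 * #u * (t u * √(Fintype.card κ)) := by
  by_contra! hnone
  set P := Measure.pi fun _ : κ => uniformCube ι
  have hcover : ⋃ u ∈ univ.filter Finset.Nonempty, badConfigurations κ u (t u) =ᵐ[P] Set.univ := by
    rw [eventuallyEq_univ]
    have hcube : ∀ᵐ x ∂P, ∀ n, ∀ j, x n j ∈ Set.Ico (0 : ℝ) 1 :=
      ae_all_iff.2 fun n =>
        (Measure.quasiMeasurePreserving_eval (fun _ => uniformCube ι) n).ae ae_uniformCube_mem_Ico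
    filter_upwards [hcube] with x hx
    obtain ⟨u, hu, hbad⟩ := hnone x hx
    exact Set.mem_biUnion (mem_filter_univ u |>.2 hu) ⟨hx, hbad⟩
  refine hsum.not_ge ?_
  calc 1 = P.real (⋃ u ∈ univ.filter Finset.Nonempty, badConfigurations κ u (t u)) := by
        rw [measureReal_congr hcover, probReal_univ]
    _ ≤ ∑ u with u.Nonempty, P.real (badConfigurations κ u (t u)) :=
        measureReal_biUnion_finset_le _ _
    _ ≤ ∑ u with u.Nonempty, 2 * Real.exp (-(t u ^ 2 / (8 * #u))) :=
        sum_le_sum fun u hu => have hu := (mem_filter_univ u).1 hu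
          measureReal_badConfigurations_le hu (ht u hu)

end UniformDeviation

section Weights

variable {ι : Type*}

lemma exists_mul_prod_max_two_le_prod {b : ι → ℝ} (hb : ∀ j, 0 < b j)
    (hlim : Tendsto b cofinite atTop) :
    ∃ κ > 0, ∀ u : Finset ι, κ * ∏ j ∈ u, max (b j) 2 ≤ ∏ j ∈ u, b j := by
  classical
  have hfin : {j | ¬2 ≤ b j}.Finite := hlim.eventually_ge_atTop 2
  have hpos (j : ι) : 0 < min 1 (b j / 2) := lt_min one_pos (half_pos (hb j))
  have hfactor (j : ι) : b j = min 1 (b j / 2) * max (b j) 2 := by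
    rcases le_total (b j) 2 with h | h
    · rw [max_eq_right h, min_eq_right (by linarith), div_mul_cancel₀ _ two_ne_zero]
    · rw [max_eq_left h, min_eq_left (by linarith), one_mul]
  refine ⟨∏ j ∈ hfin.toFinset, min 1 (b j / 2), prod_pos fun j _ => hpos j, fun u => ?_⟩
  rw [prod_congr rfl fun j _ => hfactor j, prod_mul_distrib]
  refine mul_le_mul_of_nonneg_right ?_ (prod_nonneg fun _ _ => by positivity)
  calc ∏ j ∈ hfin.toFinset, min 1 (b j / 2)
      ≤ ∏ j ∈ u ∩ hfin.toFinset, min 1 (b j / 2) :=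
        prod_le_prod_of_subset_of_le_one inter_subset_right (fun j _ => (hpos j).le)
          fun _ _ _ => min_le_left _ _
    _ = ∏ j ∈ u, min 1 (b j / 2) := by
        refine prod_subset inter_subset_left fun j hj hj' => ?_
        have : 2 ≤ b j := by simpa [hj] using hj'
        exact min_eq_left (by linarith)

lemma sum_le_prod_of_two_le {u : Finset ι} (hu : u.Nonempty) {b : ι → ℝ} (hb : ∀ j ∈ u, 2 ≤ b j) :
    ∑ j ∈ u, b j ≤ ∏ j ∈ u, b j := by
  suffices 2 ≤ ∏ j ∈ u, b j ∧ ∑ j ∈ u, b j ≤ ∏ j ∈ u, b j from this.2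
  induction hu using Finset.Nonempty.cons_induction with
  | singleton j => simpa using hb
  | cons j u _ _ ih =>
    rw [forall_mem_cons] at hb
    obtain ⟨hprod, hsum⟩ := ih hb.2
    rw [prod_cons, sum_cons]
    constructor <;> nlinarith [hb.1]

lemma exists_mul_card_mul_sum_le_two_pow_mul_prod {b : ι → ℝ} (hb : ∀ j, 0 < b j)
    (hlim : Tendsto b cofinite atTop) :
    ∃ κ > 0, ∀ u : Finset ι, κ * (#u * ∑ j ∈ u, max (b j) 2) ≤ 2 ^ #u * ∏ j ∈ u, b j := by
  obtain ⟨κ, hκ, hprod⟩ := exists_mul_prod_max_two_le_prod hb hlim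
  refine ⟨κ, hκ, fun u => ?_⟩
  rcases u.eq_empty_or_nonempty with rfl | hu
  · simp
  calc κ * (#u * ∑ j ∈ u, max (b j) 2)
      ≤ κ * (2 ^ #u * ∏ j ∈ u, max (b j) 2) := by
        gcongr
        · exact_mod_cast Nat.lt_two_pow_self.le
        · exact sum_le_prod_of_two_le hu fun _ _ => le_max_right _ _
    _ = 2 ^ #u * (κ * ∏ j ∈ u, max (b j) 2) := by ring
    _ ≤ 2 ^ #u * ∏ j ∈ u, b j := by gcongr; exact hprod u

lemma tendsto_tsum_exp_neg_mul {b : ι → ℝ} (hb : ∀ j, 0 < b j) {c : ℝ}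
    (hsum : Summable fun j => Real.exp (-(c * b j))) :
    Tendsto (fun M => ∑' j, Real.exp (-(M * b j))) atTop (nhds 0) := by
  rw [← tsum_zero]
  refine tendsto_tsum_of_dominated_convergence hsum (fun j => ?_) ?_
  · exact Real.tendsto_exp_neg_atTop_nhds_zero.comp (tendsto_id.atTop_mul_const (hb j))
  · filter_upwards [eventually_ge_atTop c] with M hM j
    rw [Real.norm_eq_abs, Real.abs_exp]
    have := hb j
    gcongr

lemma exists_ge_summable_exp_neg_mul_and_tsum_lt {b : ι → ℝ} (hb : ∀ j, 0 < b j) {c : ℝ}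
    (hsum : Summable fun j => Real.exp (-(c * b j))) (M₀ : ℝ) {ε : ℝ} (hε : 0 < ε) :
    ∃ M ≥ M₀, Summable (fun j => Real.exp (-(M * b j))) ∧ ∑' j, Real.exp (-(M * b j)) < ε := by
  obtain ⟨M, hMε, hM₀, hMc⟩ := (((tendsto_tsum_exp_neg_mul hb hsum).eventually_lt_const hε).and
    ((eventually_ge_atTop M₀).and (eventually_ge_atTop c))).exists
  refine ⟨M, hM₀, hsum.of_nonneg_of_le (fun _ => (Real.exp_pos _).le) fun j => ?_, hMε⟩
  have := hb j
  gcongr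

lemma sum_nonempty_prod_le_exp_sum_sub_one [Fintype ι] {e : ι → ℝ} (he : ∀ j, 0 ≤ e j) :
    ∑ u : Finset ι with u.Nonempty, ∏ j ∈ u, e j ≤ Real.exp (∑ j, e j) - 1 := by
  classical
  have hexpand : ∏ j, (1 + e j) = 1 + ∑ u : Finset ι with u.Nonempty, ∏ j ∈ u, e j := by
    rw [prod_one_add, powerset_univ, ← add_sum_erase _ _ (mem_univ ∅), prod_empty]
    congr 2
    ext u
    simp [nonempty_iff_ne_empty]
  linarith [Real.prod_one_add_le_exp_sum univ he]

/-- The multiple of `√N` which, up to a factor `5 |u|`, deviations on the face `u` may reach. The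
reciprocals `(g j)⁻¹` cancel the weight of `u`, and the powers of `2` absorb the factor `|u|`. -/
noncomputable def chainingLevel (g : ι → ℝ) (T : ℝ) (u : Finset ι) : ℝ :=
  T * ∏ j ∈ u, (g j)⁻¹ / 2

variable {g : ι → ℝ}

lemma prod_mul_card_mul_chainingLevel_le (hg : ∀ j, 0 < g j) {T : ℝ} (hT : 0 ≤ T) (u : Finset ι) :
    (∏ j ∈ u, g j) * (#u * chainingLevel g T u) ≤ T := by
  have hcancel : (∏ j ∈ u, g j) * ∏ j ∈ u, (g j)⁻¹ / 2 = (1 / 2) ^ #u := by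
    rw [← prod_mul_distrib, ← prod_const]
    refine prod_congr rfl fun j _ => ?_
    rw [← mul_div_assoc, mul_inv_cancel₀ (hg j).ne']
  calc (∏ j ∈ u, g j) * (#u * chainingLevel g T u) = T * (#u * (1 / 2) ^ #u) := by
        rw [chainingLevel, ← hcancel]; ring
    _ ≤ T * 1 := by
        gcongr
        rw [one_div, inv_pow, ← div_eq_mul_inv, div_le_one (by positivity)]
        exact_mod_cast Nat.lt_two_pow_self.le
    _ = T := mul_one T

lemma chainingLevel_sq (g : ι → ℝ) (T : ℝ) (u : Finset ι) :
    chainingLevel g T u ^ 2 = T ^ 2 * (2 ^ #u * ∏ j ∈ u, (g j)⁻¹ ^ 2 / 8) := by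
  rw [chainingLevel, mul_pow, ← prod_pow, ← prod_const, ← prod_mul_distrib]
  congr 1
  exact prod_congr rfl fun j _ => by ring

/-- Truncating the summands below at `2` makes the sum control `|u|` as well. -/
lemma exists_chainingLevel_sq_ge (hg : ∀ j, 0 < g j)
    (hlim : Tendsto (fun j => (g j)⁻¹ ^ 2) cofinite atTop) {M : ℝ} (hM : 0 < M) :
    ∃ T > 0, ∀ u : Finset ι,
      8 * #u * (M * ∑ j ∈ u, max ((g j)⁻¹ ^ 2 / 8) 2) ≤ chainingLevel g T u ^ 2 := by
  obtain ⟨κ, hκ, hle⟩ := exists_mul_card_mul_sum_le_two_pow_mul_prod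
    (b := fun j => (g j)⁻¹ ^ 2 / 8) (fun j => by have := hg j; positivity)
    (hlim.atTop_div_const (by norm_num))
  refine ⟨√(8 * M / κ), by positivity, fun u => ?_⟩
  rw [chainingLevel_sq, Real.sq_sqrt (by positivity)]
  calc 8 * #u * (M * ∑ j ∈ u, max ((g j)⁻¹ ^ 2 / 8) 2)
      = 8 * M / κ * (κ * (#u * ∑ j ∈ u, max ((g j)⁻¹ ^ 2 / 8) 2)) := by field_simp
    _ ≤ 8 * M / κ * (2 ^ #u * ∏ j ∈ u, (g j)⁻¹ ^ 2 / 8) :=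
        mul_le_mul_of_nonneg_left (hle u) (by positivity)

lemma tendsto_cofinite_atTop_of_summable_exp_neg_mul {a : ι → ℝ} {c : ℝ} (hc : 0 < c)
    (hsum : Summable fun j => Real.exp (-c * a j)) : Tendsto a cofinite atTop :=
  (tendsto_const_mul_atBot_of_neg (neg_lt_zero.2 hc)).1
    (Real.tendsto_exp_comp_nhds_zero.1 hsum.tendsto_cofinite_zero)

lemma exists_chainingLevel_bounds (hg : ∀ j, 0 < g j) {c : ℝ} (hc : 0 < c)
    (hsum : Summable fun j => Real.exp (-c * (g j)⁻¹ ^ 2)) :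
    ∃ T > 0, ∃ e : ι → ℝ, (∀ j, 0 ≤ e j) ∧ Summable e ∧ ∑' j, e j < Real.log (3 / 2) ∧
      ∀ u : Finset ι, u.Nonempty → 14 * (#u : ℝ) ≤ chainingLevel g T u ∧
        Real.exp (-(chainingLevel g T u ^ 2 / (8 * #u))) ≤ ∏ j ∈ u, e j := by
  set b : ι → ℝ := fun j => max ((g j)⁻¹ ^ 2 / 8) 2
  have hb2 (j : ι) : 2 ≤ b j := le_max_right _ _
  have hbsum : Summable fun j => Real.exp (-(8 * c * b j)) := by
    refine hsum.of_nonneg_of_le (fun _ => (Real.exp_pos _).le) fun j => Real.exp_le_exp.2 ?_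
    have : (g j)⁻¹ ^ 2 / 8 ≤ b j := le_max_left _ _
    nlinarith
  obtain ⟨M, hM, hMsum, hMlog⟩ := exists_ge_summable_exp_neg_mul_and_tsum_lt
    (fun j => two_pos.trans_le (hb2 j)) hbsum 13 (Real.log_pos (by norm_num : (1 : ℝ) < 3 / 2))
  obtain ⟨T, hT, hsq⟩ := exists_chainingLevel_sq_ge hg
    (tendsto_cofinite_atTop_of_summable_exp_neg_mul hc hsum) (M := M) (by linarith)
  refine ⟨T, hT, fun j => Real.exp (-(M * b j)), fun j => (Real.exp_pos _).le, hMsum, hMlog,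
    fun u hu => ⟨?_, ?_⟩⟩
  · have hcard : #u * 2 ≤ ∑ j ∈ u, b j := by
      simpa using card_nsmul_le_sum u b 2 fun j _ => hb2 j
    have hlevel : 0 ≤ chainingLevel g T u :=
      mul_nonneg hT.le (prod_nonneg fun j _ => by have := hg j; positivity)
    refine le_of_sq_le_sq ?_ hlevel
    calc (14 * (#u : ℝ)) ^ 2 ≤ 8 * #u * (13 * (#u * 2)) := by nlinarith
      _ ≤ 8 * #u * (M * ∑ j ∈ u, b j) := by gcongr
      _ ≤ chainingLevel g T u ^ 2 := hsq u
  · rw [← Real.exp_sum, sum_neg_distrib, ← mul_sum]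
    gcongr
    rw [le_div_iff₀' (by positivity)]
    exact hsq u

lemma exists_levels_of_summable_exp {γ : ℕ → ℝ} (hγ : ∀ j, 1 ≤ j → 0 < γ j) {c : ℝ} (hc : 0 < c)
    (hsum : Summable fun j => Real.exp (-c * (γ (j + 1))⁻¹ ^ 2)) :
    ∃ T > 0, ∀ s : ℕ, ∃ t : Finset (Fin s) → ℝ,
      (∀ u, u.Nonempty → 14 * (#u : ℝ) ≤ t u) ∧ (∀ u, weightOf γ u * (#u * t u) ≤ T) ∧
      ∑ u with u.Nonempty, 2 * Real.exp (-(t u ^ 2 / (8 * #u))) < 1 := by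
  have hg (j : ℕ) : 0 < γ (j + 1) := hγ _ j.succ_pos
  obtain ⟨T, hT, e, he0, he, helog, hlevel⟩ := exists_chainingLevel_bounds hg hc hsum
  refine ⟨T, hT, fun s => ⟨fun u => chainingLevel (fun j => γ (j + 1)) T (u.map Fin.valEmbedding),
    fun u hu => ?_, fun u => ?_, ?_⟩⟩
  · simpa using (hlevel _ (hu.map (f := Fin.valEmbedding))).1
  · simpa [weightOf] using prod_mul_card_mul_chainingLevel_le hg hT.le (u.map Fin.valEmbedding)
  calc _ ≤ ∑ u : Finset (Fin s) with u.Nonempty, 2 * ∏ j ∈ u, e j := by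
        refine sum_le_sum fun u hu => ?_
        have hu := (mem_filter_univ u).1 hu
        gcongr
        simpa using (hlevel _ (hu.map (f := Fin.valEmbedding))).2
    _ ≤ 2 * (Real.exp (∑ j : Fin s, e j) - 1) := by
        rw [← mul_sum]
        gcongr
        exact sum_nonempty_prod_le_exp_sum_sub_one fun j => he0 j
    _ < 2 * (3 / 2 - 1) := by
        gcongr
        rw [← Real.lt_log_iff_exp_lt (by norm_num), ← Finset.sum_range e]
        exact (he.sum_le_tsum _ fun j _ => he0 j).trans_lt helog
    _ = 1 := by norm_num

end Weights

lemma wMinDisc_le_wStarDisc {γ : ℕ → ℝ} (hγ : ∀ j, 1 ≤ j → 0 ≤ γ j) {N s : ℕ}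
    {x : Fin N → Fin s → ℝ} (hx : ∀ n j, x n j ∈ Set.Ico (0 : ℝ) 1) :
    wMinDisc γ N s ≤ wStarDisc γ x := by
  refine csInf_le ⟨0, ?_⟩ ⟨x, hx, rfl⟩
  rintro _ ⟨y, _, rfl⟩
  refine Real.sSup_nonneg ?_
  rintro _ ⟨z, _, u, _, rfl⟩
  exact mul_nonneg (prod_nonneg fun j _ => hγ _ j.1.succ_pos) (abs_nonneg _)

lemma wStarDisc_le_of_forall_abs_countDev_le {γ : ℕ → ℝ} {N s : ℕ}
    (hN : N ≠ 0) {x : Fin N → Fin s → ℝ} {B : ℝ} (hB : 0 ≤ B)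
    (hx : ∀ u : Finset (Fin s), u.Nonempty → ∀ w ∈ cubeFace u,
      weightOf γ u * |countDev (uniformCube (Fin s)) x (anchoredBox w)| ≤ B) :
    wStarDisc γ x ≤ B / N := by
  refine Real.sSup_le ?_ (by positivity)
  rintro _ ⟨z, hz, u, hu, rfl⟩
  have hface := projPoint_mem_cubeFace u hz
  rw [localDisc_eq_countDev_div hN x hface.1, abs_div, Nat.abs_cast, ← mul_div_assoc]
  gcongr
  exact hx u hu _ hface

/-- if the positive weights `γ` satisfy `∑_j exp(−c γ_j⁻²) < ∞` for some
`c > 0`, then `disc_γ(N,s) ≤ C/√N` for a constant `C` depending only on `γ`. -/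
theorem wMinDisc_le_inv_sqrt (γ : ℕ → ℝ) (hγ : ∀ j, 1 ≤ j → 0 < γ j)
    (hsum : ∃ c : ℝ, 0 < c ∧ Summable fun j => Real.exp (-c * ((γ (j + 1))⁻¹) ^ 2)) :
    ∃ C : ℝ, 0 < C ∧ ∀ s N : ℕ, 1 ≤ s → 1 ≤ N →
      wMinDisc γ N s ≤ C / Real.sqrt N := by
  obtain ⟨c, hc, hsum⟩ := hsum
  obtain ⟨T, hT, hlevels⟩ := exists_levels_of_summable_exp hγ hc hsum
  have hγ0 : ∀ j, 1 ≤ j → 0 ≤ γ j := fun j hj => (hγ j hj).le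
  refine ⟨5 * T, by positivity, fun s N _ hN => ?_⟩
  obtain ⟨t, hlarge, hweight, htail⟩ := hlevels s
  obtain ⟨x, hcube, hx⟩ := exists_forall_abs_countDev_le (Fin N) hlarge htail
  have hbound : ∀ u : Finset (Fin s), u.Nonempty → ∀ w ∈ cubeFace u,
      weightOf γ u * |countDev (uniformCube (Fin s)) x (anchoredBox w)| ≤ 5 * T * √N := by
    intro u hu w hw
    have hwt : 0 ≤ weightOf γ u := prod_nonneg fun j _ => hγ0 _ j.1.succ_pos
    calc _ ≤ weightOf γ u * (5 * #u * (t u * √N)) := by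
          gcongr
          simpa using hx u hu w hw
      _ = 5 * (weightOf γ u * (#u * t u)) * √N := by ring
      _ ≤ 5 * T * √N := by gcongr; exact hweight u
  calc wMinDisc γ N s ≤ wStarDisc γ x := wMinDisc_le_wStarDisc hγ0 hcube
    _ ≤ 5 * T * √N / N :=
        wStarDisc_le_of_forall_abs_countDev_le (by omega) (by positivity) hbound
    _ = 5 * T / √N := by rw [mul_div_assoc, Real.sqrt_div_self', mul_one_div]
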